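/- Composition of λS coercions does not increase height: for λS coercions c : A ⇒ B and d : B ⇒ C, height(c ⨟ d) ≤ max(height(c), height(d)). -/

import Mathlib

/-!
Composition never nests one coercion inside the other: the only clauses that recurse under a
height-increasing constructor (`→`, `×`, `+`) peel that constructor off *both* arguments, so the
bound `height (c ⨟ d) ≤ max (height c) (height d)` propagates from the components, since
`1 + max` is monotone. All other clauses return one of the arguments, fail (height `0`), or
recurse below constructors that do not count for the height. The bound is therefore proved
simultaneously for the five mutually recursive composition functions, by recursion on the same
weights `wS`, `wI`, `wG` that justify the termination of composition.
-/

set_option maxHeartbeats 1000000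

abbrev Label : Type := ℕ

inductive BaseTy : Type
  | nat | bool | int | unit | bot
deriving DecidableEq

inductive GType : Type
  | base (b : BaseTy)
  | unk
  | arr (A B : GType)
  | prod (A B : GType)
  | sum (A B : GType)
deriving DecidableEq

inductive Atomic : GType → Prop
  | base (b : BaseTy) : Atomic (.base b)
  | unk : Atomic .unk

inductive TyPrec : GType → GType → Prop
  | unk (A : GType) : TyPrec .unk A
  | base (b : BaseTy) : TyPrec (.base b) (.base b)
  | arr : TyPrec A A' → TyPrec B B' → TyPrec (.arr A B) (.arr A' B')
  | prod : TyPrec A A' → TyPrec B B' → TyPrec (.prod A B) (.prod A' B')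
  | sum : TyPrec A A' → TyPrec B B' → TyPrec (.sum A B) (.sum A' B')

inductive CtxPrec : List GType → List GType → Prop
  | nil : CtxPrec [] []
  | cons : TyPrec A A' → CtxPrec Γ Γ' → CtxPrec (A :: Γ) (A' :: Γ')

inductive Consis : GType → GType → Type
  | unkR (A : GType) : Consis A .unk
  | unkL (B : GType) : Consis .unk B
  | base (b : BaseTy) : Consis (.base b) (.base b)
  | arr : Consis A' A → Consis B B' → Consis (.arr A B) (.arr A' B')
  | prod : Consis A A' → Consis B B' → Consis (.prod A B) (.prod A' B')
  | sum : Consis A A' → Consis B B' → Consis (.sum A B) (.sum A' B')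

def Consis.join : ∀ {A B : GType}, Consis A B → GType
  | _, _, .unkR A => A
  | _, _, .unkL B => B
  | _, _, .base b => .base b
  | _, _, .arr c d => .arr c.join d.join
  | _, _, .prod c d => .prod c.join d.join
  | _, _, .sum c d => .sum c.join d.join

def Consis.refl : (A : GType) → Consis A A
  | .unk => .unkR .unk
  | .base b => .base b
  | .arr A B => .arr (Consis.refl A) (Consis.refl B)
  | .prod A B => .prod (Consis.refl A) (Consis.refl B)
  | .sum A B => .sum (Consis.refl A) (Consis.refl B)

def Consis.symm : ∀ {A B : GType}, Consis A B → Consis B A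
  | _, _, .unkR A => .unkL A
  | _, _, .unkL B => .unkR B
  | _, _, .base b => .base b
  | _, _, .arr c d => .arr c.symm d.symm
  | _, _, .prod c d => .prod c.symm d.symm
  | _, _, .sum c d => .sum c.symm d.symm

mutual
def Consis.joinL : ∀ {A B : GType}, (c : Consis A B) → Consis A c.join
  | _, _, .unkR A => Consis.refl A
  | _, _, .unkL B => .unkL B
  | _, _, .base b => .base b
  | _, _, .arr c d => .arr (Consis.joinR c).symm (Consis.joinL d)
  | _, _, .prod c d => .prod (Consis.joinL c) (Consis.joinL d)
  | _, _, .sum c d => .sum (Consis.joinL c) (Consis.joinL d)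

def Consis.joinR : ∀ {A B : GType}, (c : Consis A B) → Consis B c.join
  | _, _, .unkR A => .unkL A
  | _, _, .unkL B => Consis.refl B
  | _, _, .base b => .base b
  | _, _, .arr c d => .arr (Consis.joinL c).symm (Consis.joinR d)
  | _, _, .prod c d => .prod (Consis.joinR c) (Consis.joinR d)
  | _, _, .sum c d => .sum (Consis.joinR c) (Consis.joinR d)
end

inductive GVar : List GType → GType → Type
  | z : GVar (A :: Γ) A
  | s : GVar Γ A → GVar (B :: Γ) A

def GVar.idx : ∀ {Γ A}, GVar Γ A → ℕ
  | _, _, .z => 0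
  | _, _, .s x => x.idx + 1

inductive Prim : GType → Type
  | base (b : BaseTy) : Prim (.base b)
  | fn (b : BaseTy) {A : GType} : Prim A → Prim (.arr (.base b) A)

def BaseTy.rep : BaseTy → Type
  | .nat => ℕ
  | .bool => Bool
  | .int => ℤ
  | .unit => Unit
  | .bot => Empty

def Prim.rep : ∀ {A : GType}, Prim A → Type
  | _, .base b => b.rep
  | _, .fn b p => b.rep → p.rep

/-- Ground types. -/
inductive Ground : GType → Prop
  | base (b : BaseTy) : Ground (.base b)
  | arr : Ground (.arr .unk .unk)
  | prod : Ground (.prod .unk .unk)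
  | sum : Ground (.sum .unk .unk)

mutual
/-- λS top-level coercions. -/
inductive SCo : GType → GType → Type
  | id : SCo .unk .unk
  | proj (H : GType) (g : Ground H) (ℓ : Label) {B : GType} (i : ICo H B) : SCo .unk B
  | mid {A B : GType} (i : ICo A B) : SCo A B

/-- λS intermediate coercions. -/
inductive ICo : GType → GType → Type
  | inj {A G : GType} (g : GCo A G) (gr : Ground G) : ICo A .unk
  | gnd {A B : GType} (g : GCo A B) : ICo A B
  | fail (A B : GType) (ℓ : Label) : ICo A B

/-- λS ground coercions. -/
inductive GCo : GType → GType → Type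
  | id (b : BaseTy) : GCo (.base b) (.base b)
  | arr {A B C D : GType} (c : SCo C A) (d : SCo B D) : GCo (.arr A B) (.arr C D)
  | prod {A B C D : GType} (c : SCo A C) (d : SCo B D) : GCo (.prod A B) (.prod C D)
  | sum {A B C D : GType} (c : SCo A C) (d : SCo B D) : GCo (.sum A B) (.sum C D)
end

mutual
/-- Height of a λS top-level coercion. -/
def heightS : ∀ {A B : GType}, SCo A B → ℕ
  | _, _, .id => 0
  | _, _, .proj _ _ _ i => heightI i
  | _, _, .mid i => heightI i
/-- Height of a λS intermediate coercion. -/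
def heightI : ∀ {A B : GType}, ICo A B → ℕ
  | _, _, .inj g _ => heightG g
  | _, _, .gnd g => heightG g
  | _, _, .fail _ _ _ => 0
/-- Height of a λS ground coercion. -/
def heightG : ∀ {A B : GType}, GCo A B → ℕ
  | _, _, .id _ => 0
  | _, _, .arr c d => 1 + max (heightS c) (heightS d)
  | _, _, .prod c d => 1 + max (heightS c) (heightS d)
  | _, _, .sum c d => 1 + max (heightS c) (heightS d)
end

mutual
/-- Size of a λS top-level coercion. -/
def sizeS : ∀ {A B : GType}, SCo A B → ℕ
  | _, _, .id => 0
  | _, _, .proj _ _ _ i => 2 + sizeI i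
  | _, _, .mid i => sizeI i
/-- Size of a λS intermediate coercion. -/
def sizeI : ∀ {A B : GType}, ICo A B → ℕ
  | _, _, .inj g _ => 2 + sizeG g
  | _, _, .gnd g => sizeG g
  | _, _, .fail _ _ _ => 0
/-- Size of a λS ground coercion. -/
def sizeG : ∀ {A B : GType}, GCo A B → ℕ
  | _, _, .id _ => 0
  | _, _, .arr c d => 1 + sizeS c + sizeS d
  | _, _, .prod c d => 1 + sizeS c + sizeS d
  | _, _, .sum c d => 1 + sizeS c + sizeS d
end

mutual
def wS : ∀ {A B : GType}, SCo A B → ℕ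
  | _, _, .id => 1
  | _, _, .proj _ _ _ i => 1 + wI i
  | _, _, .mid i => 1 + wI i
def wI : ∀ {A B : GType}, ICo A B → ℕ
  | _, _, .inj g _ => 1 + wG g
  | _, _, .gnd g => 1 + wG g
  | _, _, .fail _ _ _ => 1
def wG : ∀ {A B : GType}, GCo A B → ℕ
  | _, _, .id _ => 1
  | _, _, .arr c d => 1 + wS c + wS d
  | _, _, .prod c d => 1 + wS c + wS d
  | _, _, .sum c d => 1 + wS c + wS d
end

mutual
/-- Composition of λS top-level coercions. -/
def comp : ∀ {A B C : GType}, SCo A B → SCo B C → SCo A C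
  | _, _, _, .id, d => d
  | _, _, _, .proj H g ℓ i, d => .proj H g ℓ (compI i d)
  | _, _, _, .mid i, d => .mid (compI i d)
termination_by _ _ _ c d => wS c + wS d
decreasing_by all_goals (simp only [wS, wI, wG]; omega)

/-- Composition of an intermediate coercion with a top-level coercion. -/
def compI : ∀ {A B C : GType}, ICo A B → SCo B C → ICo A C
  | _, _, _, .fail A B ℓ, _ => .fail A _ ℓ
  | _, _, _, .inj g gr, .id => .inj g gr
  | _, _, _, .inj g gr, .proj _ hr ℓ i => compInjProj g gr hr ℓ i
  | _, _, _, .inj _ _, .mid i' =>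
      match i' with
      | .fail _ _ ℓ => .fail _ _ ℓ
      | .inj g' _ => nomatch g'
      | .gnd g' => nomatch g'
  | _, _, _, .gnd g, .mid i' => compGI g i'
  | _, _, _, .gnd g, .id => nomatch g
  | _, _, _, .gnd g, .proj _ _ _ _ => nomatch g
termination_by _ _ _ i d => wI i + wS d
decreasing_by all_goals (simp only [wS, wI, wG]; omega)

/-- Composition of an injection `(g ; G!)` with a projection `(H?ℓ ; i)`:
if the ground types agree the coercions collapse, otherwise the composite fails. -/
def compInjProj : ∀ {A G H C : GType}, GCo A G → Ground G → Ground H → Label →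
    ICo H C → ICo A C
  | _, G, H, _, g, _, _, ℓ, i =>
      if h : G = H then compGI (h ▸ g) i else .fail _ _ ℓ
termination_by A G H C g _ _ _ i => wG g + wI i + 1
decreasing_by subst h; simp only []; omega

/-- Composition of a ground coercion with an intermediate coercion. -/
def compGI : ∀ {A B C : GType}, GCo A B → ICo B C → ICo A C
  | _, _, _, g, .inj h hr => .inj (compG g h) hr
  | _, _, _, g, .gnd h => .gnd (compG g h)
  | _, _, _, _, .fail _ _ ℓ => .fail _ _ ℓ
termination_by _ _ _ g i => wG g + wI i
decreasing_by all_goals (simp only [wS, wI, wG]; omega)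

/-- Composition of ground coercions. -/
def compG : ∀ {A B C : GType}, GCo A B → GCo B C → GCo A C
  | _, _, _, .id b, .id _ => .id b
  | _, _, _, .arr c₁ d₁, .arr c₂ d₂ => .arr (comp c₂ c₁) (comp d₁ d₂)
  | _, _, _, .prod c₁ d₁, .prod c₂ d₂ => .prod (comp c₁ c₂) (comp d₁ d₂)
  | _, _, _, .sum c₁ d₁, .sum c₂ d₂ => .sum (comp c₁ c₂) (comp d₁ d₂)
termination_by _ _ _ g h => wG g + wG h
decreasing_by all_goals (simp only [wS, wI, wG]; omega)
end

mutual
theorem heightS_comp_le : ∀ {A B C : GType} (c : SCo A B) (d : SCo B C),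
    heightS (comp c d) ≤ max (heightS c) (heightS d)
  | _, _, _, .id, d => by simp [comp]
  | _, _, _, .proj H g ℓ i, d => by
      simpa only [comp, heightS] using heightI_compI_le i d
  | _, _, _, .mid i, d => by
      simpa only [comp, heightS] using heightI_compI_le i d
termination_by _ _ _ c d => wS c + wS d
decreasing_by all_goals (simp only [wS]; omega)

theorem heightI_compI_le : ∀ {A B C : GType} (i : ICo A B) (d : SCo B C),
    heightI (compI i d) ≤ max (heightI i) (heightS d)
  | _, _, _, .fail A B ℓ, _ => by simp [compI, heightI]
  | _, _, _, .inj g gr, .id => by simp [compI, heightI]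
  | _, _, _, .inj g gr, .proj _ hr ℓ i => by
      simpa only [compI, heightI, heightS] using heightI_compInjProj_le g gr hr ℓ i
  | _, _, _, .inj _ _, .mid (.fail _ _ ℓ) => by simp [compI, heightI]
  | _, _, _, .gnd g, .mid i' => by
      simpa only [compI, heightI, heightS] using heightI_compGI_le g i'
  -- No ground coercion has source or target `?`, so the remaining cases are vacuous.
  | _, _, _, .inj _ _, .mid (.inj g' _) => nomatch g'
  | _, _, _, .inj _ _, .mid (.gnd g') => nomatch g'
  | _, _, _, .gnd g, .id => nomatch g
  | _, _, _, .gnd g, .proj _ _ _ _ => nomatch g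
termination_by _ _ _ i d => wI i + wS d
decreasing_by all_goals (simp only [wS, wI]; omega)

theorem heightI_compInjProj_le : ∀ {A G H C : GType} (g : GCo A G) (gr : Ground G)
    (hr : Ground H) (ℓ : Label) (i : ICo H C),
    heightI (compInjProj g gr hr ℓ i) ≤ max (heightG g) (heightI i)
  | _, G, H, _, g, gr, hr, ℓ, i => by
      -- The recursive call precedes `subst`, which would hide from the termination check that
      -- its argument is `i` itself.
      have ih := fun h : G = H => heightI_compGI_le (h ▸ g) i
      by_cases h : G = H
      · subst h
        simpa only [compInjProj, dite_true] using ih rfl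
      · simp [compInjProj, h, heightI]
termination_by A G H C g _ _ _ i => wG g + wI i + 1
decreasing_by subst h; simp only []; omega

theorem heightI_compGI_le : ∀ {A B C : GType} (g : GCo A B) (i : ICo B C),
    heightI (compGI g i) ≤ max (heightG g) (heightI i)
  | _, _, _, g, .inj h hr => by
      simpa only [compGI, heightI] using heightG_compG_le g h
  | _, _, _, g, .gnd h => by
      simpa only [compGI, heightI] using heightG_compG_le g h
  | _, _, _, _, .fail _ _ ℓ => by simp [compGI, heightI]
termination_by _ _ _ g i => wG g + wI i
decreasing_by all_goals (simp only [wI]; omega)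

theorem heightG_compG_le : ∀ {A B C : GType} (g : GCo A B) (h : GCo B C),
    heightG (compG g h) ≤ max (heightG g) (heightG h)
  | _, _, _, .id b, .id _ => by simp [compG]
  | _, _, _, .arr c₁ d₁, .arr c₂ d₂ => by
      have hc := heightS_comp_le c₂ c₁
      have hd := heightS_comp_le d₁ d₂
      simp only [compG, heightG]
      omega
  | _, _, _, .prod c₁ d₁, .prod c₂ d₂ => by
      have hc := heightS_comp_le c₁ c₂
      have hd := heightS_comp_le d₁ d₂
      simp only [compG, heightG]
      omega
  | _, _, _, .sum c₁ d₁, .sum c₂ d₂ => by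
      have hc := heightS_comp_le c₁ c₂
      have hd := heightS_comp_le d₁ d₂
      simp only [compG, heightG]
      omega
termination_by _ _ _ g h => wG g + wG h
decreasing_by all_goals (simp only [wG]; omega)
end

/-- Lemma 7.5 (`compose-height` for λS): composition does not increase height. -/
theorem comp_height {A B C : GType} (c : SCo A B) (d : SCo B C) :
    heightS (comp c d) ≤ max (heightS c) (heightS d) := by
  exact heightS_comp_le c d
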